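/- arXiv:1610.05850 — 4 statements merged into one kernel-verified Lean document; each statement's English description precedes it below -/
import Mathlib

section
/- Let n ≥ d be positive integers, let N and R be real n×d matrices, let K be a d×d symmetric positive definite matrix, and let c > 0 be a real number such that Nᵀ·R = c·K (equivalently Rᵀ·N = c·Kᵀ = c·K), so that Rᵀ·N and Nᵀ·N are invertible. Let G be any n×n symmetric positive definite matrix, set P = I − N·(Nᵀ·N)⁻¹·Nᵀ, and define M = R·(Rᵀ·N)⁻¹·Rᵀ + P·G·P. Then M·N = R, i.e. M solves the consistency (exactness) condition of the mimetic family of inner-product matrices. -/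
open Matrix

/-! The hypothesis gives `Rᵀ N = c K`, which is positive definite, hence invertible, so
`R (Rᵀ N)⁻¹ Rᵀ` sends `N` to `R`. Invertibility of `Rᵀ N` also makes `N` injective, so `Nᵀ N` is
positive definite and thus invertible; hence `P`, the orthogonal projection onto the complement of
the range of `N`, kills `N`, and the stabilization term `P G P` contributes nothing. -/

/-- The mimetic family of mass matrices `M = R (Rᵀ N)⁻¹ Rᵀ + P G P`, with
`P = I − N (Nᵀ N)⁻¹ Nᵀ`, solves the consistency (exactness) condition `M N = R`. -/
theorem mimetic_mass_matrix_consistency {n d : ℕ} (hn : 0 < n) (hd : 0 < d) (hdn : d ≤ n)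
    (N R : Matrix (Fin n) (Fin d) ℝ) (K : Matrix (Fin d) (Fin d) ℝ)
    (hK : K.PosDef) (c : ℝ) (hc : 0 < c)
    (hNR : Nᵀ * R = c • K)
    (G : Matrix (Fin n) (Fin n) ℝ) (hG : G.PosDef)
    (P M : Matrix (Fin n) (Fin n) ℝ)
    (hP : P = 1 - N * (Nᵀ * N)⁻¹ * Nᵀ)
    (hM : M = R * (Rᵀ * N)⁻¹ * Rᵀ + P * G * P) :
    M * N = R := by
  have hRN : (Rᵀ * N).PosDef := by
    have h : Rᵀ * N = c • K := by
      rw [← transpose_transpose (Rᵀ * N), transpose_mul, transpose_transpose, hNR, transpose_smul,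
        ← conjTranspose_eq_transpose_of_trivial, hK.isHermitian.eq]
    rw [h]
    exact hK.smul hc
  have hN : Function.Injective N.mulVec := by
    have h := mulVec_injective_of_isUnit hRN.isUnit
    refine Function.Injective.of_comp (f := Rᵀ.mulVec) ?_
    simpa only [Function.comp_def, mulVec_mulVec] using h
  have hNN : (Nᵀ * N).PosDef := by
    simpa only [conjTranspose_eq_transpose_of_trivial] using PosDef.conjTranspose_mul_self N hN
  have hPN : P * N = 0 := by
    rw [hP, Matrix.sub_mul, Matrix.one_mul, Matrix.mul_assoc, Matrix.mul_assoc,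
      nonsing_inv_mul _ ((isUnit_iff_isUnit_det _).mp hNN.isUnit), Matrix.mul_one, sub_self]
  rw [hM, Matrix.add_mul, Matrix.mul_assoc _ P N, hPN, Matrix.mul_zero, add_zero,
    Matrix.mul_assoc, Matrix.mul_assoc,
    nonsing_inv_mul _ ((isUnit_iff_isUnit_det _).mp hRN.isUnit), Matrix.mul_one]
end

section
/- Let n ≥ d be positive integers and let N and R be real n×d matrices of full column rank d such that Nᵀ·R is invertible. Then an n×n real matrix W satisfies W·R = N if and only if there exists an n×n real matrix G̃ such that W = N·(Nᵀ·R)⁻¹·Nᵀ + G̃·(I − R·(Rᵀ·R)⁻¹·Rᵀ); in the 'only if' direction one may take G̃ = W − N·(Nᵀ·R)⁻¹·Nᵀ. -/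
/-!
The matrix `N (Nᵀ R)⁻¹ Nᵀ` is a particular solution of `W R = N`, so the solutions are its
translates by the matrices `X` with `X R = 0`. Since `Rᵀ R` is invertible,
`P = 1 - R (Rᵀ R)⁻¹ Rᵀ` is defined and satisfies `P R = 0`, and `X R = 0` gives `X = X P`;
hence those `X` are exactly the matrices `G̃ P`.
-/

open Matrix

/-- Over `ℝ`, the Gram matrix `Rᵀ R` is positive definite as soon as `R` has full column rank. -/
theorem isUnit_transpose_mul_self_of_injective {n d : ℕ} (R : Matrix (Fin n) (Fin d) ℝ)
    (hR : Function.Injective R.mulVec) : IsUnit (Rᵀ * R) := by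
  have h := (Matrix.PosDef.conjTranspose_mul_self R hR).isUnit
  rwa [Matrix.conjTranspose_eq_transpose_of_trivial] at h

/-- A matrix `W` satisfies `W R = N` iff it belongs to the extended mixed-hybrid
family `W = N (Nᵀ R)⁻¹ Nᵀ + G̃ (I − R (Rᵀ R)⁻¹ Rᵀ)` for some `G̃`; in the
'only if' direction one may take `G̃ = W − N (Nᵀ R)⁻¹ Nᵀ`. -/
theorem extended_mixed_hybrid_general_solution {n d : ℕ} (hn : 0 < n) (hd : 0 < d) (hdn : d ≤ n)
    (N R : Matrix (Fin n) (Fin d) ℝ)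
    (hN : Function.Injective N.mulVec) (hR : Function.Injective R.mulVec)
    (hNR : IsUnit (Nᵀ * R))
    (W : Matrix (Fin n) (Fin n) ℝ) :
    (W * R = N ↔
      ∃ Gt : Matrix (Fin n) (Fin n) ℝ,
        W = N * (Nᵀ * R)⁻¹ * Nᵀ + Gt * (1 - R * (Rᵀ * R)⁻¹ * Rᵀ)) ∧
    (W * R = N →
      W = N * (Nᵀ * R)⁻¹ * Nᵀ +
        (W - N * (Nᵀ * R)⁻¹ * Nᵀ) * (1 - R * (Rᵀ * R)⁻¹ * Rᵀ)) := by
  have hGram : IsUnit (Rᵀ * R) := isUnit_transpose_mul_self_of_injective R hR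
  have hNRinv : (Nᵀ * R)⁻¹ * (Nᵀ * R) = 1 :=
    nonsing_inv_mul _ ((isUnit_iff_isUnit_det _).1 hNR)
  have hGraminv : (Rᵀ * R)⁻¹ * (Rᵀ * R) = 1 :=
    nonsing_inv_mul _ ((isUnit_iff_isUnit_det _).1 hGram)
  have hpart : N * (Nᵀ * R)⁻¹ * Nᵀ * R = N := by
    rw [Matrix.mul_assoc, Matrix.mul_assoc, hNRinv, Matrix.mul_one]
  have hproj : (1 - R * (Rᵀ * R)⁻¹ * Rᵀ) * R = 0 := by
    rw [Matrix.sub_mul, Matrix.one_mul, Matrix.mul_assoc, Matrix.mul_assoc, hGraminv,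
      Matrix.mul_one, sub_self]
  have honly : W * R = N →
      W = N * (Nᵀ * R)⁻¹ * Nᵀ +
        (W - N * (Nᵀ * R)⁻¹ * Nᵀ) * (1 - R * (Rᵀ * R)⁻¹ * Rᵀ) := by
    intro h
    have hz : (W - N * (Nᵀ * R)⁻¹ * Nᵀ) * R = 0 := by
      rw [Matrix.sub_mul, h, hpart, sub_self]
    rw [Matrix.mul_sub, Matrix.mul_one, Matrix.mul_assoc R, ← Matrix.mul_assoc _ R, hz,
      Matrix.zero_mul, sub_zero, add_sub_cancel]
  refine ⟨⟨fun h => ⟨_, honly h⟩, ?_⟩, honly⟩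
  rintro ⟨Gt, rfl⟩
  rw [Matrix.add_mul, hpart, Matrix.mul_assoc Gt, hproj, Matrix.mul_zero, add_zero]
end

section
/- Let m, k, n be positive integers, let C be an n×k real matrix (the primary curl, CURL : E_h → F_h) and D an m×n real matrix (the primary divergence, DIV : F_h → C_h) satisfying the exact identity D·C = 0. Let M_C, M_F, M_E be symmetric positive definite matrices of sizes m×m, n×n, k×k respectively. Define the derived gradient G̃ := −M_F⁻¹·Dᵀ·M_C and the derived curl C̃ := M_E⁻¹·Cᵀ·M_F. Then C̃·G̃ = 0. -/
open Matrix

/-- If the primary operators satisfy `DIV ∘ CURL = 0`, then the derived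
operators `G̃RAD = −M_F⁻¹ DIVᵀ M_C` and `C̃URL = M_E⁻¹ CURLᵀ M_F` satisfy
`C̃URL ∘ G̃RAD = 0`. -/
theorem derived_curl_grad_zero {m k n : ℕ} (hm : 0 < m) (hk : 0 < k) (hn : 0 < n)
    (C : Matrix (Fin n) (Fin k) ℝ) (D : Matrix (Fin m) (Fin n) ℝ)
    (hDC : D * C = 0)
    (MC : Matrix (Fin m) (Fin m) ℝ) (hMC : MC.PosDef)
    (MF : Matrix (Fin n) (Fin n) ℝ) (hMF : MF.PosDef)
    (ME : Matrix (Fin k) (Fin k) ℝ) (hME : ME.PosDef) :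
    (ME⁻¹ * Cᵀ * MF) * (-(MF⁻¹ * Dᵀ * MC)) = 0 := by
  have hdet : IsUnit MF.det := MF.isUnit_iff_isUnit_det.mp hMF.isUnit
  have hCD : Cᵀ * Dᵀ = 0 := by rw [← transpose_mul, hDC, transpose_zero]
  -- `MF * MF⁻¹` cancels in the middle, leaving the factor `Cᵀ * Dᵀ = (D * C)ᵀ`.
  calc (ME⁻¹ * Cᵀ * MF) * (-(MF⁻¹ * Dᵀ * MC))
      = -(ME⁻¹ * (Cᵀ * ((MF * MF⁻¹) * Dᵀ)) * MC) := by
        simp only [Matrix.mul_neg, Matrix.mul_assoc]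
    _ = 0 := by
        rw [mul_nonsing_inv MF hdet, Matrix.one_mul, hCD, Matrix.mul_zero, Matrix.zero_mul,
          neg_zero]
end

section
/- Let n ≥ d be positive integers, let N and R be real n×d matrices, let Σ be an n×n diagonal matrix with diagonal entries in {−1, +1}, let F be an n×n diagonal matrix with strictly positive diagonal entries, and let W̃ be an n×n real matrix such that N = W̃·Σ·F⁻¹·R (linearity preservation). Suppose the bilinear form (x, y) ↦ xᵀ·Σ·F·W̃·y on ℝⁿ×ℝⁿ is symmetric and positive definite. Then the matrix W := W̃·Σ·F⁻¹ is symmetric positive definite, hence invertible, and M := W⁻¹ satisfies M·N = R; that is, M belongs to the family of matrices solving the mimetic consistency condition. -/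
open Matrix

/-!
Since `Σ² = 1`, the diagonal matrix `G = Σ F⁻¹` is the inverse of `Σ F`, so
`W̃ Σ F⁻¹ = Gᵀ (Σ F W̃) G` is congruent, through an invertible matrix, to the positive definite
matrix `Σ F W̃`. It is therefore positive definite, hence invertible, and the consistency condition
is linearity preservation `N = W R` multiplied on the left by `W⁻¹`.
-/

/-- Algebraic core of the equivalence lemma for mixed-hybrid schemes: if a
linearity-preserving scheme satisfies `N = W̃ Σ F⁻¹ R` and the bilinear form
with matrix `Σ F W̃` is symmetric positive definite, then `W = W̃ Σ F⁻¹` is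
symmetric positive definite, hence invertible, and `M = W⁻¹` satisfies the
mimetic consistency condition `M N = R`. -/
theorem mixed_hybrid_is_mimetic {n d : ℕ} (hn : 0 < n) (hd : 0 < d) (hdn : d ≤ n)
    (N R : Matrix (Fin n) (Fin d) ℝ)
    (s : Fin n → ℝ) (hs : ∀ f, s f = 1 ∨ s f = -1)
    (fa : Fin n → ℝ) (hfa : ∀ f, 0 < fa f)
    (S F : Matrix (Fin n) (Fin n) ℝ)
    (hS : S = Matrix.diagonal s) (hF : F = Matrix.diagonal fa)
    (Wt : Matrix (Fin n) (Fin n) ℝ)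
    (hlin : N = Wt * S * F⁻¹ * R)
    (hbil : (S * F * Wt).PosDef) :
    (Wt * S * F⁻¹).PosDef ∧ IsUnit (Wt * S * F⁻¹) ∧ (Wt * S * F⁻¹)⁻¹ * N = R := by
  have hFinv : F⁻¹ = diagonal (fun f => (fa f)⁻¹) := by
    apply inv_eq_left_inv
    rw [hF, diagonal_mul_diagonal, ← diagonal_one]
    congr 1
    funext f
    exact inv_mul_cancel₀ (hfa f).ne'
  set G : Matrix (Fin n) (Fin n) ℝ := S * F⁻¹ with hG
  have hGd : G = diagonal (fun f => s f * (fa f)⁻¹) := by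
    rw [hG, hFinv, hS, diagonal_mul_diagonal]
  have hGt : Gᴴ = G := by
    rw [hGd, diagonal_conjTranspose]
    rfl
  have hGinv : G * (S * F) = 1 := by
    rw [hGd, hS, hF, diagonal_mul_diagonal, diagonal_mul_diagonal, ← diagonal_one]
    congr 1
    funext f
    have := (hfa f).ne'
    rcases hs f with h | h <;> simp [h, this]
  have hGu : IsUnit G := IsUnit.of_mul_eq_one _ hGinv
  have hW : Gᴴ * (S * F * Wt) * G = Wt * S * F⁻¹ := by
    rw [hGt, ← Matrix.mul_assoc G, hGinv, Matrix.one_mul, hG, Matrix.mul_assoc]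
  have hpos : (Wt * S * F⁻¹).PosDef := by
    rw [← hW]
    exact hbil.conjTranspose_mul_mul_same (mulVec_injective_of_isUnit hGu)
  refine ⟨hpos, hpos.isUnit, ?_⟩
  rw [hlin]
  exact nonsing_inv_mul_cancel_left _ _ ((isUnit_iff_isUnit_det _).mp hpos.isUnit)
end
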